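/- arXiv:math/0406310 — 10 statements merged into one kernel-verified Lean document; each statement's English description precedes it below -/
import Mathlib

section
/- Let G̃ be a strict lift of the endofunctor G along the forgetful functor U, and for each T-algebra (A, ν) let σ_{(A,ν)} : T(G A) ⟶ G A denote the structure morphism of the T-algebra G̃(A, ν) (this makes sense since U(G̃(A,ν)) = G A). Define ℓ_A := σ_{F A} ∘ T(G(η_A)) : T(G A) ⟶ G(T A). Then the family {ℓ_A} is natural in A, i.e. for every morphism f : A ⟶ B in 𝓜 one has G(T(f)) ∘ ℓ_A = ℓ_B ∘ T(G(f)). -/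
/-! The structure maps `σ X : T (G X.A) ⟶ G X.A` of a strict lift are natural in the algebra `X`,
because the lift sends an algebra morphism `h` to an algebra morphism with underlying map `G h`
(`sigma_naturality`). Applying this to the free morphism `F f`, whose underlying map is `T f`, and
combining it with naturality of `η` gives naturality of `ℓ`. -/

open CategoryTheory

universe v u

/-- Commutation of a square of structure maps is invariant under transporting its carriers along
equalities of objects. -/
theorem square_of_eqToHom {M : Type u} [Category.{v} M] (T : M ⥤ M) {P Q P' Q' : M}
    (p : P = P') (q : Q = Q') (a : T.obj P ⟶ P) (b : T.obj Q ⟶ Q) (g : P ⟶ Q)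
    (a' : T.obj P' ⟶ P') (b' : T.obj Q' ⟶ Q') (g' : P' ⟶ Q')
    (ha : a = eqToHom (congrArg T.obj p) ≫ a' ≫ eqToHom p.symm)
    (hb : b = eqToHom (congrArg T.obj q) ≫ b' ≫ eqToHom q.symm)
    (hg : g = eqToHom p ≫ g' ≫ eqToHom q.symm)
    (h : T.map g ≫ b = a ≫ g) : T.map g' ≫ b' = a' ≫ g' := by
  subst p q
  simp only [eqToHom_refl, Category.comp_id, Category.id_comp] at ha hb hg
  subst ha hb hg
  exact h

/-- Naturality of the structure morphisms of a strict lift with respect to algebra morphisms.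
The `eqToHom`s come from `hG` being an equality of functors. -/
theorem sigma_naturality {M : Type u} [Category.{v} M] (T : Monad M) (G : M ⥤ M)
    (Gt : T.Algebra ⥤ T.Algebra) (hG : Gt ⋙ T.forget = T.forget ⋙ G)
    (σ : ∀ X : T.Algebra, (T : M ⥤ M).obj (G.obj X.A) ⟶ G.obj X.A)
    (hσ : ∀ X : T.Algebra, (Gt.obj X).a
        = eqToHom (congrArg (T : M ⥤ M).obj (Functor.congr_obj hG X))
          ≫ σ X ≫ eqToHom (Functor.congr_obj hG X).symm)
    {X Y : T.Algebra} (h : X ⟶ Y) :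
    (T : M ⥤ M).map (G.map h.f) ≫ σ Y = σ X ≫ G.map h.f :=
  square_of_eqToHom (T : M ⥤ M) (Functor.congr_obj hG X) (Functor.congr_obj hG Y)
    _ _ (Gt.map h).f _ _ _ (hσ X) (hσ Y) (Functor.congr_hom hG h) (Gt.map h).h

/-- Given a strict lift `Gt` of `G` along the forgetful functor, with
structure morphisms `σ X : T (G X.A) ⟶ G X.A` of the algebras `Gt.obj X`, the family
`ℓ_A := σ (F A) ∘ T (G (η_A))` is natural in `A`. -/
theorem stmt_2 {M : Type u} [Category.{v} M] (T : Monad M) (G : M ⥤ M)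
    (Gt : T.Algebra ⥤ T.Algebra) (hG : Gt ⋙ T.forget = T.forget ⋙ G)
    (σ : ∀ X : T.Algebra, (T : M ⥤ M).obj (G.obj X.A) ⟶ G.obj X.A)
    (hσ : ∀ X : T.Algebra, (Gt.obj X).a
        = eqToHom (congrArg (T : M ⥤ M).obj (Functor.congr_obj hG X))
          ≫ σ X ≫ eqToHom (Functor.congr_obj hG X).symm)
    (ℓ : ∀ A : M, (T : M ⥤ M).obj (G.obj A) ⟶ G.obj ((T : M ⥤ M).obj A))
    (hℓ : ∀ A : M, ℓ A = (T : M ⥤ M).map (G.map (T.η.app A)) ≫ σ (T.free.obj A)) :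
    ∀ {A B : M} (f : A ⟶ B),
      (T : M ⥤ M).map (G.map f) ≫ ℓ B = ℓ A ≫ G.map ((T : M ⥤ M).map f) := by
  intro A B f
  have e : f ≫ T.η.app B = T.η.app A ≫ (T : M ⥤ M).map f := T.η.naturality f
  -- Abstracting `σ (F A)` and `σ (F B)` replaces the carrier `(T.free.obj A).A` by `T.obj A`.
  have key : ∀ (a : (T : M ⥤ M).obj (G.obj ((T : M ⥤ M).obj A)) ⟶ G.obj ((T : M ⥤ M).obj A))
      (b : (T : M ⥤ M).obj (G.obj ((T : M ⥤ M).obj B)) ⟶ G.obj ((T : M ⥤ M).obj B)),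
      (T : M ⥤ M).map (G.map ((T : M ⥤ M).map f)) ≫ b = a ≫ G.map ((T : M ⥤ M).map f) →
      (T : M ⥤ M).map (G.map f) ≫ (T : M ⥤ M).map (G.map (T.η.app B)) ≫ b
        = ((T : M ⥤ M).map (G.map (T.η.app A)) ≫ a) ≫ G.map ((T : M ⥤ M).map f) := by
    intro a b n
    rw [Category.assoc, ← n]
    simp only [← Category.assoc, ← Functor.map_comp, e]
  rw [hℓ, hℓ]
  exact key _ _ (sigma_naturality T G Gt hG σ hσ (T.free.map f))
end

section
/- Let G̃ be a strict lift of the endofunctor G along the forgetful functor U, let σ_{(A,ν)} : T(G A) ⟶ G A denote the structure morphism of G̃(A, ν), and set ℓ_A := σ_{F A} ∘ T(G(η_A)). Then ℓ satisfies the multiplication axiom (D1): G(μ_A) ∘ ℓ_{T A} ∘ T(ℓ_A) = ℓ_A ∘ μ_{G A} for every object A of 𝓜. -/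
/-!
Transporting the structure map of `Gt.obj X` along the identity of carriers shows that
`σ X` is itself a `T`-algebra structure on `G X.A` (`transport_assoc`) and that `G` sends algebra
morphisms to morphisms for these structures (`transport_naturality`). Since `μ_A` is an algebra
morphism `F (T A) ⟶ F A`, naturality moves `G μ_A` past `σ (F (T A))`, where it cancels
`G η_{T A}` by the unit law; what remains is associativity of `σ (F A)` and naturality of `μ`
(`multiplication_axiom`).
-/

open CategoryTheory

universe v u

/-- Associativity of an algebra structure transported along an isomorphism of carriers. -/
lemma transport_assoc {M : Type u} [Category.{v} M] (T : Monad M) (B : T.Algebra) {Y : M}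
    (e : B.A ≅ Y) (s : (T : M ⥤ M).obj Y ⟶ Y)
    (hs : B.a = (T : M ⥤ M).map e.hom ≫ s ≫ e.inv) :
    T.μ.app Y ≫ s = (T : M ⥤ M).map s ≫ s := by
  have hs' : s = (T : M ⥤ M).map e.inv ≫ B.a ≫ e.hom := by
    simp [hs, ← Functor.map_comp_assoc]
  have h2 : (T : M ⥤ M).map ((T : M ⥤ M).map e.inv) ≫ T.μ.app B.A
      = T.μ.app Y ≫ (T : M ⥤ M).map e.inv := T.μ.naturality e.inv
  subst hs'
  simp only [Functor.map_comp, Category.assoc]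
  rw [← Functor.map_comp_assoc (T : M ⥤ M) e.hom, e.hom_inv_id, (T : M ⥤ M).map_id,
    Category.id_comp, ← B.assoc_assoc, reassoc_of% h2]

/-- Algebra morphisms remain compatible with structure maps transported along isomorphisms of
carriers. -/
lemma transport_naturality {M : Type u} [Category.{v} M] (T : Monad M) {B C : T.Algebra}
    {Y Z : M} (e : B.A ≅ Y) (d : C.A ≅ Z) (f : B ⟶ C) (g : Y ⟶ Z)
    (hf : f.f = e.hom ≫ g ≫ d.inv)
    (s : (T : M ⥤ M).obj Y ⟶ Y) (hs : B.a = (T : M ⥤ M).map e.hom ≫ s ≫ e.inv)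
    (t : (T : M ⥤ M).obj Z ⟶ Z) (ht : C.a = (T : M ⥤ M).map d.hom ≫ t ≫ d.inv) :
    (T : M ⥤ M).map g ≫ t = s ≫ g := by
  have h := f.h
  rw [hf, hs, ht, ← Functor.map_comp_assoc] at h
  rw [← cancel_epi ((T : M ⥤ M).map e.hom), ← cancel_mono d.inv]
  simpa using h

/-- The diagram chase: `s` and `t` play the roles of `σ (F A)` and `σ (F (T A))`. -/
lemma multiplication_axiom {M : Type u} [Category.{v} M] (T : Monad M) (G : M ⥤ M) (A : M)
    (s : (T : M ⥤ M).obj (G.obj ((T : M ⥤ M).obj A)) ⟶ G.obj ((T : M ⥤ M).obj A))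
    (t : (T : M ⥤ M).obj (G.obj ((T : M ⥤ M).obj ((T : M ⥤ M).obj A))) ⟶
      G.obj ((T : M ⥤ M).obj ((T : M ⥤ M).obj A)))
    (ha : T.μ.app _ ≫ s = (T : M ⥤ M).map s ≫ s)
    (hn : (T : M ⥤ M).map (G.map (T.μ.app A)) ≫ s = t ≫ G.map (T.μ.app A)) :
    (T : M ⥤ M).map ((T : M ⥤ M).map (G.map (T.η.app A)) ≫ s) ≫
        ((T : M ⥤ M).map (G.map (T.η.app ((T : M ⥤ M).obj A))) ≫ t) ≫ G.map (T.μ.app A)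
      = T.μ.app (G.obj A) ≫ (T : M ⥤ M).map (G.map (T.η.app A)) ≫ s := by
  have hμ : (T : M ⥤ M).map ((T : M ⥤ M).map (G.map (T.η.app A))) ≫
      T.μ.app (G.obj ((T : M ⥤ M).obj A))
      = T.μ.app (G.obj A) ≫ (T : M ⥤ M).map (G.map (T.η.app A)) :=
    T.μ.naturality (G.map (T.η.app A))
  have hu : (T : M ⥤ M).map (G.map (T.η.app ((T : M ⥤ M).obj A))) ≫
      (T : M ⥤ M).map (G.map (T.μ.app A)) = 𝟙 _ := by
    rw [← (T : M ⥤ M).map_comp, ← G.map_comp, T.left_unit]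
    exact (congrArg (T : M ⥤ M).map (G.map_id _)).trans ((T : M ⥤ M).map_id _)
  have hμ' := congrArg (· ≫ s) hμ
  have hu' := congrArg (· ≫ s) hu
  simp only [Category.assoc] at hμ' hu'
  rw [Category.assoc, ← hn, hu', (T : M ⥤ M).map_comp, Category.assoc]
  erw [Category.id_comp]
  rw [← ha]
  exact hμ'

/-- Given a strict lift `Gt` of `G` along the forgetful functor, with
structure morphisms `σ X` of the algebras `Gt.obj X`, the family
`ℓ_A := σ (F A) ∘ T (G (η_A))` satisfies the multiplication axiom (D1):
`G (μ_A) ∘ ℓ_{T A} ∘ T (ℓ_A) = ℓ_A ∘ μ_{G A}`. -/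
theorem stmt_4 {M : Type u} [Category.{v} M] (T : Monad M) (G : M ⥤ M)
    (Gt : T.Algebra ⥤ T.Algebra) (hG : Gt ⋙ T.forget = T.forget ⋙ G)
    (σ : ∀ X : T.Algebra, (T : M ⥤ M).obj (G.obj X.A) ⟶ G.obj X.A)
    (hσ : ∀ X : T.Algebra, (Gt.obj X).a
        = eqToHom (congrArg (T : M ⥤ M).obj (Functor.congr_obj hG X))
          ≫ σ X ≫ eqToHom (Functor.congr_obj hG X).symm)
    (ℓ : ∀ A : M, (T : M ⥤ M).obj (G.obj A) ⟶ G.obj ((T : M ⥤ M).obj A))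
    (hℓ : ∀ A : M, ℓ A = (T : M ⥤ M).map (G.map (T.η.app A)) ≫ σ (T.free.obj A)) :
    ∀ A : M,
      (T : M ⥤ M).map (ℓ A) ≫ ℓ ((T : M ⥤ M).obj A) ≫ G.map (T.μ.app A)
        = T.μ.app (G.obj A) ≫ ℓ A := by
  intro A
  let e : ∀ X : T.Algebra, (Gt.obj X).A ≅ G.obj X.A :=
    fun X => eqToIso (Functor.congr_obj hG X)
  have hs : ∀ X : T.Algebra,
      (Gt.obj X).a = (T : M ⥤ M).map (e X).hom ≫ σ X ≫ (e X).inv := by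
    intro X
    refine (hσ X).trans ?_
    rw [← eqToHom_map (T : M ⥤ M) (Functor.congr_obj hG X)]
    rfl
  let m : T.free.obj ((T : M ⥤ M).obj A) ⟶ T.free.obj A :=
    { f := T.μ.app A
      h := T.assoc A }
  have hm : (Gt.map m).f = (e _).hom ≫ G.map (T.μ.app A) ≫ (e _).inv :=
    Functor.congr_hom hG m
  rw [hℓ A, hℓ ((T : M ⥤ M).obj A)]
  exact multiplication_axiom T G A _ _
    (transport_assoc T _ (e (T.free.obj A)) _ (hs _))
    (transport_naturality T (e _) (e _) (Gt.map m) _ hm _ (hs _) _ (hs _))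
end

section
/- Let G̃ be a strict lift of the endofunctor G along the forgetful functor U, let σ_{(A,ν)} : T(G A) ⟶ G A denote the structure morphism of G̃(A, ν), and set ℓ_A := σ_{F A} ∘ T(G(η_A)). Then for every T-algebra (A, ν) the structure morphism of G̃(A, ν) is recovered from ℓ: σ_{(A,ν)} = G(ν) ∘ ℓ_A. In other words, the strict lift determined by the family ℓ coincides with G̃ on every T-algebra. -/
open CategoryTheory

universe v u

/-!
The structure map `ν : T A ⟶ A` of an algebra is itself an algebra morphism `F A ⟶ (A, ν)`, so the
lift sends it to an algebra morphism with underlying map `G ν`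
(`strictLift_structure_naturality`): `G ν ∘ σ_{F A} = σ_{(A, ν)} ∘ T (G ν)`. Precomposing with
`T (G η_A)` and using the unit law `ν ∘ η_A = id` gives the claim.
-/

/-- Cancelling the transport isomorphisms from the algebra morphism law. -/
theorem map_comp_eq_of_transport {M : Type u} [Category.{v} M] (F : M ⥤ M) {A A' B B' : M}
    (p : A = A') (q : B = B') (s : F.obj A' ⟶ A') (t : F.obj B' ⟶ B') (g : A' ⟶ B')
    (h : F.map (eqToHom p ≫ g ≫ eqToHom q.symm) ≫
          eqToHom (congrArg F.obj q) ≫ t ≫ eqToHom q.symm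
        = (eqToHom (congrArg F.obj p) ≫ s ≫ eqToHom p.symm) ≫
          eqToHom p ≫ g ≫ eqToHom q.symm) :
    F.map g ≫ t = s ≫ g := by
  subst p q
  simpa using h

/-- If `g` intertwines `t` and `s` and has a section `e`, then `s` is determined by `t`. -/
theorem eq_of_section {M : Type u} [Category.{v} M] (F : M ⥤ M) {A B : M}
    (e : A ⟶ B) (g : B ⟶ A) (he : e ≫ g = 𝟙 A) (s : F.obj A ⟶ A) (t : F.obj B ⟶ B)
    (h : F.map g ≫ s = t ≫ g) : s = (F.map e ≫ t) ≫ g := by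
  rw [Category.assoc, ← h, ← F.map_comp_assoc, he, F.map_id, Category.id_comp]

/-- The structure morphisms of a strict lift are natural in algebra morphisms: this is the algebra
morphism law for `Gt.map f`, transported along the object equalities `(Gt.obj X).A = G.obj X.A`. -/
theorem strictLift_structure_naturality {M : Type u} [Category.{v} M] (T : Monad M) (G : M ⥤ M)
    (Gt : T.Algebra ⥤ T.Algebra) (hG : Gt ⋙ T.forget = T.forget ⋙ G)
    (σ : ∀ X : T.Algebra, (T : M ⥤ M).obj (G.obj X.A) ⟶ G.obj X.A)
    (hσ : ∀ X : T.Algebra, (Gt.obj X).a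
        = eqToHom (congrArg (T : M ⥤ M).obj (Functor.congr_obj hG X))
          ≫ σ X ≫ eqToHom (Functor.congr_obj hG X).symm)
    {X Y : T.Algebra} (f : X ⟶ Y) :
    (T : M ⥤ M).map (G.map f.f) ≫ σ Y = σ X ≫ G.map f.f := by
  have hf : (Gt.map f).f = eqToHom (Functor.congr_obj hG X) ≫ G.map f.f ≫
      eqToHom (Functor.congr_obj hG Y).symm := Functor.congr_hom hG f
  have h := (Gt.map f).h
  rw [hf, hσ, hσ] at h
  exact map_comp_eq_of_transport (T : M ⥤ M) (Functor.congr_obj hG X) (Functor.congr_obj hG Y)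
    (σ X) (σ Y) (G.map f.f) h

/-- Given a strict lift `Gt` of `G` along the forgetful functor, with
structure morphisms `σ X` of the algebras `Gt.obj X`, and `ℓ_A := σ (F A) ∘ T (G (η_A))`,
the structure morphism of `Gt.obj X` is recovered from `ℓ`: `σ X = G (X.a) ∘ ℓ_{X.A}`
for every `T`-algebra `X = (A, ν)`. -/
theorem stmt_5 {M : Type u} [Category.{v} M] (T : Monad M) (G : M ⥤ M)
    (Gt : T.Algebra ⥤ T.Algebra) (hG : Gt ⋙ T.forget = T.forget ⋙ G)
    (σ : ∀ X : T.Algebra, (T : M ⥤ M).obj (G.obj X.A) ⟶ G.obj X.A)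
    (hσ : ∀ X : T.Algebra, (Gt.obj X).a
        = eqToHom (congrArg (T : M ⥤ M).obj (Functor.congr_obj hG X))
          ≫ σ X ≫ eqToHom (Functor.congr_obj hG X).symm)
    (ℓ : ∀ A : M, (T : M ⥤ M).obj (G.obj A) ⟶ G.obj ((T : M ⥤ M).obj A))
    (hℓ : ∀ A : M, ℓ A = (T : M ⥤ M).map (G.map (T.η.app A)) ≫ σ (T.free.obj A)) :
    ∀ X : T.Algebra, σ X = ℓ X.A ≫ G.map X.a := by
  intro X
  -- The structure map `X.a`, regarded as an algebra morphism out of the free algebra on `X.A`.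
  let f : T.free.obj X.A ⟶ X := { f := X.a, h := X.assoc.symm }
  have h : (T : M ⥤ M).map (G.map X.a) ≫ σ X = σ (T.free.obj X.A) ≫ G.map X.a :=
    strictLift_structure_naturality T G Gt hG σ hσ f
  have he : G.map (T.η.app X.A) ≫ G.map X.a = 𝟙 (G.obj X.A) := by
    rw [← G.map_comp, X.unit]
    exact G.map_id X.A
  rw [hℓ]
  exact eq_of_section _ _ _ he _ _ h
end

section
/- The assignment ℓ ↦ G̃_ℓ, sending a distributive law ℓ of T over G to the strict lift G̃_ℓ given by (A, ν) ↦ (G A, G(ν) ∘ ℓ_A) and f ↦ G(f), is a bijection between the set of distributive laws of T over G (natural transformations ℓ_A : T(G A) ⟶ G(T A) satisfying (D1) and (D3)) and the set of strict lifts of G along U (functors G̃ : 𝓜^T ⥤ 𝓜^T with G̃ ⋙ U = U ⋙ G); its inverse sends a strict lift G̃ to the family ℓ_A := σ_{F A} ∘ T(G(η_A)), where σ_{(A,ν)} is the structure morphism of G̃(A,ν). -/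
/-!
A strict lift `G̃` is the same thing as a choice, for every algebra `X`, of an algebra structure
`σ_X : T (G X.A) ⟶ G X.A` such that `G f` is a homomorphism whenever `f` is; this is
`StrictLift.str` together with `str_unit`, `str_assoc`, `str_naturality` and, for the fact that
`σ` determines the lift, `StrictLift.ext_str`. All transport along the object equality
`(G̃ X).A = G X.A` is confined to these lemmas
and the ones they rest on.

The heart of the matter is `StrictLift.ell_comp`: with `ℓ_A := σ_{F A} ∘ T (G η_A)`, one has
`G ν ∘ ℓ_A = σ_{(A, ν)}`. Indeed `ν` is a homomorphism `F A ⟶ (A, ν)`, so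
`G ν ∘ σ_{F A} ∘ T (G η_A) = σ_{(A, ν)} ∘ T (G (ν ∘ η_A)) = σ_{(A, ν)}`.
This says that the lift built from `ℓ` is `G̃`, and, at `F A`, it reduces (D1) to the associativity
of `σ_{F A}`. Conversely, starting from a distributive law, naturality of `ℓ` gives
`G μ_A ∘ ℓ_{T A} ∘ T (G η_A) = G μ_A ∘ G (T η_A) ∘ ℓ_A = ℓ_A`.
-/

open CategoryTheory

universe v u

/-- A distributive law of a monad `T` over an endofunctor `G`: a natural transformation
with components `ℓ A : T (G A) ⟶ G (T A)` satisfying (D1) and (D3). -/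
structure EndoDistribLaw {M : Type u} [Category.{v} M] (T : Monad M) (G : M ⥤ M) where
  ℓ : ∀ A : M, (T : M ⥤ M).obj (G.obj A) ⟶ G.obj ((T : M ⥤ M).obj A)
  nat : ∀ {A B : M} (f : A ⟶ B),
    (T : M ⥤ M).map (G.map f) ≫ ℓ B = ℓ A ≫ G.map ((T : M ⥤ M).map f)
  d1 : ∀ A : M,
    (T : M ⥤ M).map (ℓ A) ≫ ℓ ((T : M ⥤ M).obj A) ≫ G.map (T.μ.app A)
      = T.μ.app (G.obj A) ≫ ℓ A
  d3 : ∀ A : M, T.η.app (G.obj A) ≫ ℓ A = G.map (T.η.app A)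

/-- A strict lift of an endofunctor `G` along the forgetful functor
`U : 𝓜^T ⥤ 𝓜`: a functor `G̃ : 𝓜^T ⥤ 𝓜^T` with `G̃ ⋙ U = U ⋙ G`. -/
structure StrictLift {M : Type u} [Category.{v} M] (T : Monad M) (G : M ⥤ M) where
  lift : T.Algebra ⥤ T.Algebra
  strict : lift ⋙ T.forget = T.forget ⋙ G

namespace StrictLift

variable {M : Type u} [Category.{v} M] {T : Monad M} {G : M ⥤ M}

/-- The structure morphism `σ_X` of `G̃ X`, transported along `(G̃ X).A = G X.A` so that it is a
`T`-algebra structure on `G X.A`. -/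
def str (lf : StrictLift T G) (X : T.Algebra) :
    (T : M ⥤ M).obj (G.obj X.A) ⟶ G.obj X.A :=
  eqToHom (congrArg (T : M ⥤ M).obj (Functor.congr_obj lf.strict X)).symm
    ≫ (lf.lift.obj X).a ≫ eqToHom (Functor.congr_obj lf.strict X)

/-- An algebra structure stays unital when it is transported along an equality of carriers. -/
lemma transport_unit (Z : T.Algebra) {B : M} (h : Z.A = B) :
    T.η.app B ≫ eqToHom (congrArg (T : M ⥤ M).obj h).symm ≫ Z.a ≫ eqToHom h = 𝟙 B := by
  subst h
  simp [Z.unit]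

lemma transport_assoc (Z : T.Algebra) {B : M} (h : Z.A = B) :
    T.μ.app B ≫ eqToHom (congrArg (T : M ⥤ M).obj h).symm ≫ Z.a ≫ eqToHom h
      = (T : M ⥤ M).map (eqToHom (congrArg (T : M ⥤ M).obj h).symm ≫ Z.a ≫ eqToHom h)
        ≫ eqToHom (congrArg (T : M ⥤ M).obj h).symm ≫ Z.a ≫ eqToHom h := by
  subst h
  simp [Z.assoc]

/-- A morphism of algebras is compatible with the structures transported to carriers `B`, `C`. -/
lemma transport_hom {Z W : T.Algebra} (f : Z ⟶ W) {B C : M} (hB : Z.A = B) (hC : W.A = C)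
    (g : B ⟶ C) (hg : f.f = eqToHom hB ≫ g ≫ eqToHom hC.symm) :
    (T : M ⥤ M).map g ≫ eqToHom (congrArg (T : M ⥤ M).obj hC).symm ≫ W.a ≫ eqToHom hC
      = (eqToHom (congrArg (T : M ⥤ M).obj hB).symm ≫ Z.a ≫ eqToHom hB) ≫ g := by
  subst hB hC
  have hg' : f.f = g := by simpa using hg
  subst hg'
  simp

/-- Algebras whose carriers both equal `B` are equal as soon as their structures agree once
transported to `B`. -/
lemma algebra_ext {Z W : T.Algebra} {B : M} (hZ : Z.A = B) (hW : W.A = B)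
    (h : eqToHom (congrArg (T : M ⥤ M).obj hZ).symm ≫ Z.a ≫ eqToHom hZ
      = eqToHom (congrArg (T : M ⥤ M).obj hW).symm ≫ W.a ≫ eqToHom hW) : Z = W := by
  obtain ⟨A, a, _, _⟩ := Z
  obtain ⟨A', a', _, _⟩ := W
  dsimp only at hZ hW
  subst hZ
  subst hW
  have h' : a = a' := by simpa using h
  subst h'
  rfl

lemma eqToHom_conj_conj {P P' Q Q' B C : M} (g : B ⟶ C) (hP : P = B) (hQ : C = Q)
    (h₁ : P = P') (h₂ : P' = B) (h₃ : C = Q') (h₄ : Q' = Q) :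
    eqToHom hP ≫ g ≫ eqToHom hQ
      = eqToHom h₁ ≫ (eqToHom h₂ ≫ g ≫ eqToHom h₃) ≫ eqToHom h₄ := by
  subst hP h₁ hQ h₃
  simp

lemma eqToHom_f {Z W : T.Algebra} (h : Z = W) :
    (eqToHom h).f = eqToHom (congrArg Monad.Algebra.A h) := by
  subst h
  rfl

lemma str_unit (lf : StrictLift T G) (X : T.Algebra) :
    T.η.app (G.obj X.A) ≫ lf.str X = 𝟙 _ :=
  transport_unit _ _

lemma str_assoc (lf : StrictLift T G) (X : T.Algebra) :
    T.μ.app (G.obj X.A) ≫ lf.str X = (T : M ⥤ M).map (lf.str X) ≫ lf.str X :=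
  transport_assoc _ _

lemma lift_map_f (lf : StrictLift T G) {X Y : T.Algebra} (f : X ⟶ Y) :
    (lf.lift.map f).f = eqToHom (Functor.congr_obj lf.strict X) ≫ G.map f.f
      ≫ eqToHom (Functor.congr_obj lf.strict Y).symm :=
  Functor.congr_hom lf.strict f

/-- `G f` is a homomorphism for the structures `σ`, because it underlies `G̃ f`. -/
lemma str_naturality (lf : StrictLift T G) {X Y : T.Algebra} (f : X ⟶ Y) :
    (T : M ⥤ M).map (G.map f.f) ≫ lf.str Y = lf.str X ≫ G.map f.f :=
  transport_hom _ _ _ _ (lf.lift_map_f f)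

/-- A strict lift is determined by its structure morphisms: its carriers and its action on
morphisms are already prescribed by `G`. -/
lemma ext_str {lf lf' : StrictLift T G} (h : ∀ X, lf.str X = lf'.str X) : lf = lf' := by
  have hobj : ∀ X, lf.lift.obj X = lf'.lift.obj X := fun X =>
    algebra_ext (Functor.congr_obj lf.strict X) (Functor.congr_obj lf'.strict X) (h X)
  have key : lf.lift = lf'.lift := by
    refine CategoryTheory.Functor.ext hobj fun X Y f => ?_
    apply Monad.Algebra.Hom.ext'
    simp only [Monad.Algebra.comp_f, eqToHom_f, lift_map_f]
    exact eqToHom_conj_conj _ _ _ _ _ _ _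
  cases lf
  cases lf'
  dsimp only at key
  subst key
  rfl

/-- The structure morphism `σ_{F A}`, with the carrier of the free algebra written as `T A`. -/
def freeStr (lf : StrictLift T G) (A : M) :
    (T : M ⥤ M).obj (G.obj ((T : M ⥤ M).obj A)) ⟶ G.obj ((T : M ⥤ M).obj A) :=
  lf.str (T.free.obj A)

lemma freeStr_unit (lf : StrictLift T G) (A : M) :
    T.η.app (G.obj ((T : M ⥤ M).obj A)) ≫ lf.freeStr A = 𝟙 (G.obj ((T : M ⥤ M).obj A)) :=
  lf.str_unit (T.free.obj A)

lemma freeStr_assoc (lf : StrictLift T G) (A : M) :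
    T.μ.app (G.obj ((T : M ⥤ M).obj A)) ≫ lf.freeStr A
      = (T : M ⥤ M).map (lf.freeStr A) ≫ lf.freeStr A :=
  lf.str_assoc (T.free.obj A)

lemma freeStr_naturality (lf : StrictLift T G) {A B : M} (f : A ⟶ B) :
    (T : M ⥤ M).map (G.map ((T : M ⥤ M).map f)) ≫ lf.freeStr B
      = lf.freeStr A ≫ G.map ((T : M ⥤ M).map f) :=
  lf.str_naturality (T.free.map f)

/-- Naturality of `σ` at the homomorphism `ν : F A ⟶ (A, ν)`. -/
lemma freeStr_comp (lf : StrictLift T G) (X : T.Algebra) :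
    (T : M ⥤ M).map (G.map X.a) ≫ lf.str X = lf.freeStr X.A ≫ G.map X.a :=
  lf.str_naturality (X := T.free.obj X.A) { f := X.a, h := X.assoc.symm }

/-- The component `ℓ_A = σ_{F A} ∘ T (G η_A)` of the distributive law of a strict lift. -/
def ell (lf : StrictLift T G) (A : M) :
    (T : M ⥤ M).obj (G.obj A) ⟶ G.obj ((T : M ⥤ M).obj A) :=
  (T : M ⥤ M).map (G.map (T.η.app A)) ≫ lf.freeStr A

/-- The distributive law of a strict lift recovers its structure morphisms, since `ν` is a
homomorphism from the free algebra with `ν ∘ η = 𝟙`. -/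
lemma ell_comp (lf : StrictLift T G) (X : T.Algebra) :
    lf.ell X.A ≫ G.map X.a = lf.str X := by
  have h : (T : M ⥤ M).map (G.map (T.η.app X.A)) ≫ (T : M ⥤ M).map (G.map X.a)
      = 𝟙 ((T : M ⥤ M).obj (G.obj X.A)) := by
    rw [← Functor.map_comp, ← Functor.map_comp, X.unit]
    exact (congrArg _ (G.map_id X.A)).trans (T.map_id _)
  unfold ell
  rw [Category.assoc, ← freeStr_comp, ← Category.assoc]
  exact (congrArg (· ≫ lf.str X) h).trans (Category.id_comp _)

lemma ell_naturality (lf : StrictLift T G) {A B : M} (f : A ⟶ B) :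
    (T : M ⥤ M).map (G.map f) ≫ lf.ell B = lf.ell A ≫ G.map ((T : M ⥤ M).map f) := by
  have hη : f ≫ T.η.app B = T.η.app A ≫ (T : M ⥤ M).map f := T.η.naturality f
  have h : (T : M ⥤ M).map (G.map f) ≫ (T : M ⥤ M).map (G.map (T.η.app B))
      = (T : M ⥤ M).map (G.map (T.η.app A)) ≫ (T : M ⥤ M).map (G.map ((T : M ⥤ M).map f)) := by
    rw [← Functor.map_comp, ← Functor.map_comp, ← Functor.map_comp, ← Functor.map_comp]
    exact congrArg (fun k => (T : M ⥤ M).map (G.map k)) hη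
  unfold ell
  rw [Category.assoc, ← freeStr_naturality, ← Category.assoc, ← Category.assoc]
  exact congrArg (· ≫ lf.freeStr B) h

lemma ell_d1 (lf : StrictLift T G) (A : M) :
    (T : M ⥤ M).map (lf.ell A) ≫ lf.ell ((T : M ⥤ M).obj A) ≫ G.map (T.μ.app A)
      = T.μ.app (G.obj A) ≫ lf.ell A := by
  have h₁ : lf.ell ((T : M ⥤ M).obj A) ≫ G.map (T.μ.app A) = lf.freeStr A :=
    lf.ell_comp (T.free.obj A)
  have h₂ : (T : M ⥤ M).map ((T : M ⥤ M).map (G.map (T.η.app A)))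
        ≫ T.μ.app (G.obj ((T : M ⥤ M).obj A))
      = T.μ.app (G.obj A) ≫ (T : M ⥤ M).map (G.map (T.η.app A)) :=
    T.μ.naturality (G.map (T.η.app A))
  rw [h₁]
  unfold ell
  rw [Functor.map_comp, Category.assoc, ← freeStr_assoc, ← Category.assoc, ← Category.assoc]
  exact congrArg (· ≫ lf.freeStr A) h₂

lemma ell_d3 (lf : StrictLift T G) (A : M) :
    T.η.app (G.obj A) ≫ lf.ell A = G.map (T.η.app A) := by
  have h : G.map (T.η.app A) ≫ T.η.app (G.obj ((T : M ⥤ M).obj A))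
      = T.η.app (G.obj A) ≫ (T : M ⥤ M).map (G.map (T.η.app A)) :=
    T.η.naturality (G.map (T.η.app A))
  unfold ell
  rw [← Category.assoc]
  refine (congrArg (· ≫ lf.freeStr A) h.symm).trans ?_
  exact (Category.assoc _ _ _).trans
    ((congrArg (G.map (T.η.app A) ≫ ·) (lf.freeStr_unit A)).trans (Category.comp_id _))

/-- The distributive law `ℓ_A = σ_{F A} ∘ T (G η_A)` of a strict lift. -/
def toDistribLaw (lf : StrictLift T G) : EndoDistribLaw T G where
  ℓ := lf.ell
  nat := lf.ell_naturality
  d1 := lf.ell_d1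
  d3 := lf.ell_d3

end StrictLift

namespace EndoDistribLaw

variable {M : Type u} [Category.{v} M] {T : Monad M} {G : M ⥤ M}

/-- The strict lift `(A, ν) ↦ (G A, G ν ∘ ℓ_A)`, `f ↦ G f` of a distributive law. -/
def toLift (d : EndoDistribLaw T G) : StrictLift T G where
  lift :=
    { obj := fun X =>
        { A := G.obj X.A
          a := d.ℓ X.A ≫ G.map X.a
          unit := by
            rw [← Category.assoc, d.d3, ← Functor.map_comp, X.unit]
            exact G.map_id _
          assoc := by
            rw [← Category.assoc, ← d.d1, Category.assoc, Category.assoc, ← G.map_comp,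
              X.assoc, G.map_comp, ← Category.assoc (d.ℓ _), ← d.nat, Functor.map_comp]
            simp only [Category.assoc] }
      map := fun {X Y} f =>
        { f := G.map f.f
          h := by
            change (T : M ⥤ M).map (G.map f.f) ≫ d.ℓ Y.A ≫ G.map Y.a
              = (d.ℓ X.A ≫ G.map X.a) ≫ G.map f.f
            rw [← Category.assoc, d.nat, Category.assoc, Category.assoc, ← G.map_comp,
              ← G.map_comp, f.h] }
      map_id := fun X => by
        apply Monad.Algebra.Hom.ext'
        exact G.map_id _
      map_comp := fun f g => by
        apply Monad.Algebra.Hom.ext'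
        exact G.map_comp _ _ }
  strict := rfl

lemma toLift_str (d : EndoDistribLaw T G) (X : T.Algebra) :
    d.toLift.str X = d.ℓ X.A ≫ G.map X.a := by
  exact (Category.id_comp _).trans (Category.comp_id _)

lemma toLift_ell (d : EndoDistribLaw T G) (A : M) : d.toLift.ell A = d.ℓ A := by
  have h₁ : d.toLift.freeStr A = d.ℓ ((T : M ⥤ M).obj A) ≫ G.map (T.μ.app A) :=
    d.toLift_str (T.free.obj A)
  have h₂ : (T : M ⥤ M).map (T.η.app A) ≫ T.μ.app A = 𝟙 _ := T.right_unit A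
  unfold StrictLift.ell
  rw [h₁, ← Category.assoc, d.nat, Category.assoc, ← G.map_comp, h₂]
  exact (congrArg (d.ℓ A ≫ ·) (G.map_id _)).trans (Category.comp_id _)

lemma ext_ell {d d' : EndoDistribLaw T G} (h : ∀ A, d.ℓ A = d'.ℓ A) : d = d' := by
  cases d
  cases d'
  congr
  exact funext h

end EndoDistribLaw

/-- Distributive laws of `T` over `G` correspond to strict lifts of `G` to `T`-algebras. -/
def distribLawEquiv {M : Type u} [Category.{v} M] (T : Monad M) (G : M ⥤ M) :
    EndoDistribLaw T G ≃ StrictLift T G where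
  toFun d := d.toLift
  invFun lf := lf.toDistribLaw
  left_inv d := EndoDistribLaw.ext_ell d.toLift_ell
  right_inv lf := StrictLift.ext_str fun X =>
    (lf.toDistribLaw.toLift_str X).trans (lf.ell_comp X)

/-- The assignment `ℓ ↦ G̃ℓ`, where `G̃ℓ (A,ν) = (G A, G ν ∘ ℓ_A)` and
`G̃ℓ f = G f`, is a bijection between distributive laws of `T` over `G` and strict lifts
of `G` along the forgetful functor `U : 𝓜^T ⥤ 𝓜`, whose inverse sends a strict lift `G̃`
to the family `ℓ_A := σ_{F A} ∘ T (G (η_A))`, `σ X` being the structure morphism of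
`G̃.obj X`. -/
theorem stmt_6 {M : Type u} [Category.{v} M] (T : Monad M) (G : M ⥤ M) :
    ∃ e : EndoDistribLaw T G ≃ StrictLift T G,
      (∀ (d : EndoDistribLaw T G) (X : T.Algebra),
        ((e d).lift.obj X).a
          = eqToHom (congrArg (T : M ⥤ M).obj (Functor.congr_obj (e d).strict X))
            ≫ (d.ℓ X.A ≫ G.map X.a)
            ≫ eqToHom (Functor.congr_obj (e d).strict X).symm) ∧
      (∀ (d : EndoDistribLaw T G) {X Y : T.Algebra} (f : X ⟶ Y),
        ((e d).lift.map f).f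
          = eqToHom (Functor.congr_obj (e d).strict X) ≫ G.map f.f
            ≫ eqToHom (Functor.congr_obj (e d).strict Y).symm) ∧
      (∀ (lf : StrictLift T G) (A : M),
        (e.symm lf).ℓ A
          = (T : M ⥤ M).map (G.map (T.η.app A))
            ≫ eqToHom (congrArg (T : M ⥤ M).obj
                (Functor.congr_obj lf.strict (T.free.obj A))).symm
            ≫ (lf.lift.obj (T.free.obj A)).a
            ≫ eqToHom (Functor.congr_obj lf.strict (T.free.obj A))) := by
  -- The carriers of the lift built from `d` agree with those of `G` definitionally, so every
  -- `eqToHom` in the first two clauses is an identity.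
  exact ⟨distribLawEquiv T G,
    fun d X => ((Category.id_comp _).trans (Category.comp_id _)).symm,
    fun d X Y f => ((Category.id_comp _).trans (Category.comp_id _)).symm,
    fun lf A => rfl⟩
end

section
/- Let ℓ = {ℓ^Q} be a distributive law from the right action L of the monoidal category C on 𝓜 to the monad T, and for a T-algebra (A, ν) and object Q of C write (A, ν) ⋄_ℓ Q := (A ⋄ Q, L(Q)(ν) ∘ ℓ^Q_A) for the lifted T-algebra. Then for all objects Q, Q' of C the associativity component Ψ^{Q,Q'}_A : A ⋄ (Q ⊗ Q') ⟶ (A ⋄ Q) ⋄ Q' is a morphism of T-algebras from (A, ν) ⋄_ℓ (Q ⊗ Q') to ((A, ν) ⋄_ℓ Q) ⋄_ℓ Q'. -/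
open CategoryTheory MonoidalCategory

attribute [local instance] CategoryTheory.endofunctorMonoidalCategory

universe v₁ u₁ v₂ u₂

variable {M : Type u₁} [Category.{v₁} M]
variable {C : Type u₂} [Category.{v₂} C] [MonoidalCategory C]

/-- A distributive law from a right action of a monoidal category `C` on `M`
(a strong monoidal functor `L : C ⥤ (M ⥤ M)`, where `M ⥤ M` carries the composition
monoidal structure) to a monad `T` on `M`: a family `ℓ Q A : T (A ⋄ Q) ⟶ (T A) ⋄ Q`
(where `A ⋄ Q := (L.obj Q).obj A`), natural in `A` and in `Q`, satisfying (D1), (D3)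
with respect to the monad structure, and (D2), (D4) with respect to the monoidal
structure isomorphisms `Ψ = Functor.OplaxMonoidal.δ L` and `u = Functor.LaxMonoidal.ε L`
of the action. -/
structure ActionDistribLaw (L : C ⥤ M ⥤ M) [L.Monoidal] (T : Monad M) where
  ℓ : ∀ (Q : C) (A : M),
    (T : M ⥤ M).obj ((L.obj Q).obj A) ⟶ (L.obj Q).obj ((T : M ⥤ M).obj A)
  natM : ∀ (Q : C) {A B : M} (f : A ⟶ B),
    (T : M ⥤ M).map ((L.obj Q).map f) ≫ ℓ Q B = ℓ Q A ≫ (L.obj Q).map ((T : M ⥤ M).map f)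
  d1 : ∀ (Q : C) (A : M),
    (T : M ⥤ M).map (ℓ Q A) ≫ ℓ Q ((T : M ⥤ M).obj A) ≫ (L.obj Q).map (T.μ.app A)
      = T.μ.app ((L.obj Q).obj A) ≫ ℓ Q A
  d3 : ∀ (Q : C) (A : M),
    T.η.app ((L.obj Q).obj A) ≫ ℓ Q A = (L.obj Q).map (T.η.app A)
  natQ : ∀ {Q Q' : C} (g : Q ⟶ Q') (A : M),
    ℓ Q A ≫ (L.map g).app ((T : M ⥤ M).obj A)
      = (T : M ⥤ M).map ((L.map g).app A) ≫ ℓ Q' A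
  d2 : ∀ (Q Q' : C) (A : M),
    ℓ (Q ⊗ Q') A ≫ (Functor.OplaxMonoidal.δ L Q Q').app ((T : M ⥤ M).obj A)
      = (T : M ⥤ M).map ((Functor.OplaxMonoidal.δ L Q Q').app A)
        ≫ ℓ Q' ((L.obj Q).obj A) ≫ (L.obj Q').map (ℓ Q A)
  d4 : ∀ A : M,
    (T : M ⥤ M).map ((Functor.LaxMonoidal.ε L).app A) ≫ ℓ (𝟙_ C) A
      = (Functor.LaxMonoidal.ε L).app ((T : M ⥤ M).obj A)

/-- Given a distributive law `ℓ` from the action `L` to the monad `T`,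
for every `T`-algebra `X = (A, ν)` and objects `Q, Q'` of `C`, the associativity
component `Ψ^{Q,Q'}_A : A ⋄ (Q ⊗ Q') ⟶ (A ⋄ Q) ⋄ Q'` is a morphism of `T`-algebras
from the lifted algebra `(A, ν) ⋄ℓ (Q ⊗ Q')` to `((A, ν) ⋄ℓ Q) ⋄ℓ Q'`, where
`(A, ν) ⋄ℓ Q := (A ⋄ Q, L(Q)(ν) ∘ ℓ^Q_A)`. -/
theorem stmt_7 (L : C ⥤ M ⥤ M) [L.Monoidal] (T : Monad M)
    (dl : ActionDistribLaw L T) (X : T.Algebra) (Q Q' : C) :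
    (T : M ⥤ M).map ((Functor.OplaxMonoidal.δ L Q Q').app X.A)
        ≫ (dl.ℓ Q' ((L.obj Q).obj X.A)
            ≫ (L.obj Q').map (dl.ℓ Q X.A ≫ (L.obj Q).map X.a))
      = (dl.ℓ (Q ⊗ Q') X.A ≫ (L.obj (Q ⊗ Q')).map X.a)
        ≫ (Functor.OplaxMonoidal.δ L Q Q').app X.A := by
  -- Push `δ` past `L(ν)` by its naturality in the acted-on object, then apply (D2).
  have hδ : (L.obj (Q ⊗ Q')).map X.a ≫ (Functor.OplaxMonoidal.δ L Q Q').app X.A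
      = (Functor.OplaxMonoidal.δ L Q Q').app ((T : M ⥤ M).obj X.A)
        ≫ (L.obj Q').map ((L.obj Q).map X.a) :=
    (Functor.OplaxMonoidal.δ L Q Q').naturality X.a
  have h := dl.d2 Q Q' X.A
  calc
    _ = ((T : M ⥤ M).map ((Functor.OplaxMonoidal.δ L Q Q').app X.A)
          ≫ dl.ℓ Q' ((L.obj Q).obj X.A) ≫ (L.obj Q').map (dl.ℓ Q X.A))
          ≫ (L.obj Q').map ((L.obj Q).map X.a) := by
      rw [Functor.map_comp]
      exact ((Category.assoc _ _ _).trans (congrArg _ (Category.assoc _ _ _))).symm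
    _ = (dl.ℓ (Q ⊗ Q') X.A ≫ (Functor.OplaxMonoidal.δ L Q Q').app ((T : M ⥤ M).obj X.A))
          ≫ (L.obj Q').map ((L.obj Q).map X.a) :=
      congrArg (· ≫ (L.obj Q').map ((L.obj Q).map X.a)) h.symm
    _ = _ :=
      (Category.assoc _ _ _).trans
        ((congrArg (dl.ℓ (Q ⊗ Q') X.A ≫ ·) hδ.symm).trans (Category.assoc _ _ _).symm)
end

section
/- Let ℓ = {ℓ^Q} be a distributive law from the right action L of the monoidal category C on 𝓜 to the monad T. Then there exists a strong monoidal functor L̃_ℓ : C ⥤ (𝓜^T ⥤ 𝓜^T) (where 𝓜^T ⥤ 𝓜^T carries the composition monoidal structure) which is a strict monoidal lift of L along U: on objects L̃_ℓ(Q)(A, ν) = (A ⋄ Q, L(Q)(ν) ∘ ℓ^Q_A), on morphisms U(L̃_ℓ(Q)(f)) = L(Q)(U f), for each g : Q ⟶ Q' one has U(L̃_ℓ(g)_{(A,ν)}) = L(g)_A, and U sends the monoidal structure isomorphisms of L̃_ℓ to those of L, i.e. U(Ψ̃^{Q,Q'}_{(A,ν)}) = Ψ^{Q,Q'}_A and U(ũ_{(A,ν)})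 = u_A. -/
/-!
The distributive law makes `(A ⋄ Q, L(Q)(ν) ∘ ℓ^Q_A)` a `T`-algebra: (D3) gives the unit axiom and
(D1), with naturality of `ℓ^Q`, gives associativity. Naturality of `ℓ` in `A` and in `Q` says that
`L(Q)(f)` and `L(g)_A` are algebra morphisms (`liftObj`, `liftFunctor`), while (D4) and (D2) say
that `u_A` and `Ψ_A` are algebra isomorphisms (`liftε`, `liftδ`). The forgetful functor from
algebras is faithful, so every functoriality, naturality and coherence equation for the lift is the
corresponding equation for `L`, evaluated at the underlying object. Since the lift is literally
equal to `L` on underlying objects, all the transport isomorphisms `eqToHom` in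
`StrictMonoidalLift` are identities.
-/

open CategoryTheory MonoidalCategory

attribute [local instance] CategoryTheory.endofunctorMonoidalCategory

universe v₁ u₁ v₂ u₂

variable {M : Type u₁} [Category.{v₁} M]
variable {C : Type u₂} [Category.{v₂} C] [MonoidalCategory C]

/-- A strict monoidal lift of a right action `L : C ⥤ (M ⥤ M)` (a strong monoidal
functor for the composition monoidal structure) along the forgetful functor
`U = T.forget : 𝓜^T ⥤ 𝓜`: a strong monoidal functor `L̃ : C ⥤ (𝓜^T ⥤ 𝓜^T)` such that
`L̃(Q) ⋙ U = U ⋙ L(Q)` for every object `Q`, `U (L̃(g)_X) = L(g)_{X.A}` for every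
morphism `g` of `C`, and `U` sends the monoidal structure isomorphisms
(`ε` and `δ = Ψ`) of `L̃` to those of `L`. -/
structure StrictMonoidalLift (L : C ⥤ M ⥤ M) [L.Monoidal] (T : Monad M) where
  lift : C ⥤ T.Algebra ⥤ T.Algebra
  monoidal : lift.Monoidal
  strict : ∀ Q : C, lift.obj Q ⋙ T.forget = T.forget ⋙ L.obj Q
  strict_map : ∀ {Q Q' : C} (g : Q ⟶ Q') (X : T.Algebra),
    ((lift.map g).app X).f
      = eqToHom (Functor.congr_obj (strict Q) X) ≫ (L.map g).app X.A
          ≫ eqToHom (Functor.congr_obj (strict Q') X).symm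
  strict_ε : ∀ X : T.Algebra,
    (letI := monoidal; ((Functor.LaxMonoidal.ε lift).app X).f)
      = (Functor.LaxMonoidal.ε L).app X.A
          ≫ eqToHom (Functor.congr_obj (strict (𝟙_ C)) X).symm
  strict_δ : ∀ (Q Q' : C) (X : T.Algebra),
    (letI := monoidal; ((Functor.OplaxMonoidal.δ lift Q Q').app X).f)
      = eqToHom (Functor.congr_obj (strict (Q ⊗ Q')) X)
          ≫ (Functor.OplaxMonoidal.δ L Q Q').app X.A
          ≫ eqToHom ((Functor.congr_obj (strict Q') ((lift.obj Q).obj X)).trans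
              (congrArg (L.obj Q').obj (Functor.congr_obj (strict Q) X))).symm

namespace ActionDistribLaw

variable {L : C ⥤ M ⥤ M} [L.Monoidal] {T : Monad M} (dl : ActionDistribLaw L T)

/-- The endofunctor `(A, ν) ↦ (A ⋄ Q, L(Q)(ν) ∘ ℓ^Q_A)` of the category of `T`-algebras. -/
def liftObj (Q : C) : T.Algebra ⥤ T.Algebra where
  obj X :=
    { A := (L.obj Q).obj X.A
      a := dl.ℓ Q X.A ≫ (L.obj Q).map X.a
      unit := by
        rw [← Category.assoc, dl.d3, ← Functor.map_comp, X.unit]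
        exact (L.obj Q).map_id X.A
      assoc := by
        rw [← Category.assoc, ← dl.d1, Functor.map_comp]
        simp only [Category.assoc]
        rw [← Functor.map_comp, X.assoc, Functor.map_comp, ← Category.assoc (dl.ℓ Q _), ← dl.natM,
          Category.assoc] }
  map {X Y} f :=
    { f := (L.obj Q).map f.f
      h := by
        dsimp only
        rw [← Category.assoc, dl.natM, Category.assoc, Category.assoc, ← Functor.map_comp,
          ← Functor.map_comp, f.h] }
  map_id X := by ext; exact (L.obj Q).map_id X.A
  map_comp f g := by ext; exact (L.obj Q).map_comp f.f g.f

/-- The lift of `L` to `T`-algebras, acting on morphisms `g` of `C` by `L(g)_A`. -/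
def liftFunctor : C ⥤ T.Algebra ⥤ T.Algebra where
  obj := dl.liftObj
  map {Q Q'} g :=
    { app := fun X =>
        { f := (L.map g).app X.A
          h := by
            dsimp only [liftObj]
            rw [← Category.assoc, ← dl.natQ, Category.assoc, Category.assoc, (L.map g).naturality] }
      naturality := fun X Y f => by ext; exact (L.map g).naturality f.f }
  map_id Q := by ext X; exact congr_app (L.map_id Q) X.A
  map_comp f g := by ext X; exact congr_app (L.map_comp f g) X.A

/-- The unit isomorphism of the lift, with underlying morphisms `u_A`. -/
def liftε : 𝟙_ (T.Algebra ⥤ T.Algebra) ≅ dl.liftFunctor.obj (𝟙_ C) :=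
  NatIso.ofComponents
    (fun X => Monad.Algebra.isoMk (A := X) (B := (dl.liftObj (𝟙_ C)).obj X)
      ((Functor.Monoidal.εIso L).app X.A) (by
        have h := (Functor.LaxMonoidal.ε L).naturality X.a
        change (T : M ⥤ M).map ((Functor.LaxMonoidal.ε L).app X.A) ≫
          dl.ℓ (𝟙_ C) X.A ≫ (L.obj (𝟙_ C)).map X.a = X.a ≫ (Functor.LaxMonoidal.ε L).app X.A
        rw [← Category.assoc, dl.d4]
        exact h.symm))
    (fun f => by ext; exact (Functor.LaxMonoidal.ε L).naturality f.f)

/-- The structure isomorphism `L̃(Q ⊗ Q') ≅ L̃(Q) ⋙ L̃(Q')` of the lift, with underlying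
morphisms `Ψ_A`. -/
def liftδ (Q Q' : C) :
    dl.liftFunctor.obj (Q ⊗ Q') ≅ dl.liftFunctor.obj Q ⊗ dl.liftFunctor.obj Q' :=
  NatIso.ofComponents
    (fun X => Monad.Algebra.isoMk (A := (dl.liftObj (Q ⊗ Q')).obj X)
      (B := (dl.liftObj Q').obj ((dl.liftObj Q).obj X))
      ((Functor.Monoidal.μIso L Q Q').symm.app X.A) (by
        have h := (Functor.OplaxMonoidal.δ L Q Q').naturality X.a
        have h2 := dl.d2 Q Q' X.A
        change (T : M ⥤ M).map ((Functor.OplaxMonoidal.δ L Q Q').app X.A) ≫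
          dl.ℓ Q' ((L.obj Q).obj X.A) ≫ (L.obj Q').map (dl.ℓ Q X.A ≫ (L.obj Q).map X.a) =
            (dl.ℓ (Q ⊗ Q') X.A ≫ (L.obj (Q ⊗ Q')).map X.a) ≫
              (Functor.OplaxMonoidal.δ L Q Q').app X.A
        rw [Functor.map_comp, Category.assoc, h]
        simp only [← Category.assoc] at h2 ⊢
        rw [h2]
        rfl))
    (fun f => by ext; exact (Functor.OplaxMonoidal.δ L Q Q').naturality f.f)

/-- The strong monoidal structure on the lift. -/
def liftCoreMonoidal : dl.liftFunctor.CoreMonoidal where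
  εIso := dl.liftε
  μIso Q Q' := (dl.liftδ Q Q').symm
  μIso_hom_natural_left g Q' := by
    ext X; exact congr_app (Functor.LaxMonoidal.μ_natural_left L g Q') X.A
  μIso_hom_natural_right Q' g := by
    ext X; exact congr_app (Functor.LaxMonoidal.μ_natural_right L Q' g) X.A
  associativity P Q R := by
    ext X; exact congr_app (Functor.LaxMonoidal.associativity L P Q R) X.A
  left_unitality Q := by
    ext X; exact congr_app (Functor.LaxMonoidal.left_unitality L Q) X.A
  right_unitality Q := by
    ext X; exact congr_app (Functor.LaxMonoidal.right_unitality L Q) X.A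

/-- The lift of `L` along the forgetful functor determined by a distributive law. -/
def strictLift : StrictMonoidalLift L T where
  lift := dl.liftFunctor
  monoidal := dl.liftCoreMonoidal.toMonoidal
  strict _ := rfl
  strict_map g X := by
    exact ((Category.id_comp _).trans (Category.comp_id _)).symm
  strict_ε X := by
    exact (Category.comp_id _).symm
  strict_δ Q Q' X := by
    exact ((Category.id_comp _).trans (Category.comp_id _)).symm

end ActionDistribLaw

/-- Given a distributive law `ℓ` from the right action `L` of `C` on `M`
to the monad `T`, there exists a strong monoidal functor `L̃ℓ : C ⥤ (𝓜^T ⥤ 𝓜^T)` which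
is a strict monoidal lift of `L` along `U = T.forget` (so `L̃ℓ(Q) ⋙ U = U ⋙ L(Q)`,
`U(L̃ℓ(g)_X) = L(g)_{X.A}`, and `U` sends the monoidal structure isomorphisms of `L̃ℓ`
to those of `L`), acting on objects by `L̃ℓ(Q)(A, ν) = (A ⋄ Q, L(Q)(ν) ∘ ℓ^Q_A)` and on
morphisms by `U(L̃ℓ(Q)(f)) = L(Q)(U f)`. -/
theorem stmt_10 (L : C ⥤ M ⥤ M) [L.Monoidal] (T : Monad M)
    (dl : ActionDistribLaw L T) :
    ∃ lf : StrictMonoidalLift L T,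
      (∀ (Q : C) (X : T.Algebra),
        ((lf.lift.obj Q).obj X).a
          = eqToHom (congrArg (T : M ⥤ M).obj (Functor.congr_obj (lf.strict Q) X))
            ≫ (dl.ℓ Q X.A ≫ (L.obj Q).map X.a)
            ≫ eqToHom (Functor.congr_obj (lf.strict Q) X).symm) ∧
      (∀ (Q : C) {X Y : T.Algebra} (f : X ⟶ Y),
        ((lf.lift.obj Q).map f).f
          = eqToHom (Functor.congr_obj (lf.strict Q) X) ≫ (L.obj Q).map f.f
            ≫ eqToHom (Functor.congr_obj (lf.strict Q) Y).symm) := by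
  refine ⟨dl.strictLift, fun Q X => ?_, fun Q X Y f => ?_⟩
  all_goals exact ((Category.id_comp _).trans (Category.comp_id _)).symm
end

section
/- Let L̃ be a strict monoidal lift of the right action L of the monoidal category C on 𝓜 to 𝓜^T along U. For each object Q of C and T-algebra (A, ν), let σ^Q_{(A,ν)} : T(A ⋄ Q) ⟶ A ⋄ Q denote the structure morphism of the T-algebra L̃(Q)(A, ν), and set ℓ^Q_M := σ^Q_{F M} ∘ T(L(Q)(η_M)) : T(M ⋄ Q) ⟶ T(M) ⋄ Q, where F M = (T M, μ_M) is the free T-algebra. Then the family {ℓ^Q} is natural in Q: for every morphism g : Q ⟶ Q' in C and every object M of 𝓜, L(g)_{T M} ∘ ℓ^Q_M = ℓ^{Q'}_M ∘ T(L(g)_M). -/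
/-!
Each `L̃(g)_X` is a morphism of `T`-algebras whose underlying morphism is `L(g)_{X.A}`, so `L(g)`
commutes with the structure morphisms: `σ Q X ≫ L(g)_{X.A} = T (L(g)_{X.A}) ≫ σ Q' X`
(`StrictMonoidalLift.structure_comp_map`). For `X` the free algebra on `A`, precomposing with
`T (L(Q)(η_A))` and using naturality of `L(g)` at `η_A` gives naturality of `ℓ` in `Q`.
-/

open CategoryTheory MonoidalCategory

attribute [local instance] CategoryTheory.endofunctorMonoidalCategory

universe v₁ u₁ v₂ u₂

variable {M : Type u₁} [Category.{v₁} M]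
variable {C : Type u₂} [Category.{v₂} C] [MonoidalCategory C]
/-- An algebra morphism, transported along equalities of the carriers, still commutes with the
transported structure morphisms. The carriers are free variables here so that the equalities can be
eliminated by substitution. -/
theorem algebra_hom_comm_of_eq {T : Monad M} {P P' : T.Algebra} (f : P ⟶ P') {X X' : M}
    (hP : P.A = X) (hP' : P'.A = X')
    (s : (T : M ⥤ M).obj X ⟶ X) (s' : (T : M ⥤ M).obj X' ⟶ X') (g : X ⟶ X')
    (hs : P.a = eqToHom (congrArg (T : M ⥤ M).obj hP) ≫ s ≫ eqToHom hP.symm)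
    (hs' : P'.a = eqToHom (congrArg (T : M ⥤ M).obj hP') ≫ s' ≫ eqToHom hP'.symm)
    (hf : f.f = eqToHom hP ≫ g ≫ eqToHom hP'.symm) :
    s ≫ g = (T : M ⥤ M).map g ≫ s' := by
  subst hP hP'
  simp only [eqToHom_refl, Category.id_comp, Category.comp_id] at hs hs' hf
  rw [← hs, ← hs', ← hf]
  exact f.h.symm

/-- `L(g)` is compatible with the structure morphisms `σ` of the lifted algebras. -/
theorem StrictMonoidalLift.structure_comp_map {L : C ⥤ M ⥤ M} [L.Monoidal] {T : Monad M}
    (lf : StrictMonoidalLift L T)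
    (σ : ∀ (Q : C) (X : T.Algebra),
      (T : M ⥤ M).obj ((L.obj Q).obj X.A) ⟶ (L.obj Q).obj X.A)
    (hσ : ∀ (Q : C) (X : T.Algebra),
      ((lf.lift.obj Q).obj X).a
        = eqToHom (congrArg (T : M ⥤ M).obj (Functor.congr_obj (lf.strict Q) X))
          ≫ σ Q X ≫ eqToHom (Functor.congr_obj (lf.strict Q) X).symm)
    {Q Q' : C} (g : Q ⟶ Q') (X : T.Algebra) :
    σ Q X ≫ (L.map g).app X.A = (T : M ⥤ M).map ((L.map g).app X.A) ≫ σ Q' X :=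
  algebra_hom_comm_of_eq ((lf.lift.map g).app X) (Functor.congr_obj (lf.strict Q) X)
    (Functor.congr_obj (lf.strict Q') X) _ _ _ (hσ Q X) (hσ Q' X) (lf.strict_map g X)

/-- Given a strict monoidal lift `L̃` of the action `L` along the
forgetful functor, with `σ Q X` the structure morphism of `L̃(Q)(X)` and
`ℓ^Q_A := σ Q (F A) ∘ T (L(Q)(η_A))`, the family `{ℓ^Q}` is natural in `Q`:
for `g : Q ⟶ Q'`, `L(g)_{T A} ∘ ℓ^Q_A = ℓ^{Q'}_A ∘ T (L(g)_A)`. -/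
theorem stmt_11 (L : C ⥤ M ⥤ M) [L.Monoidal] (T : Monad M)
    (lf : StrictMonoidalLift L T)
    (σ : ∀ (Q : C) (X : T.Algebra),
      (T : M ⥤ M).obj ((L.obj Q).obj X.A) ⟶ (L.obj Q).obj X.A)
    (hσ : ∀ (Q : C) (X : T.Algebra),
      ((lf.lift.obj Q).obj X).a
        = eqToHom (congrArg (T : M ⥤ M).obj (Functor.congr_obj (lf.strict Q) X))
          ≫ σ Q X ≫ eqToHom (Functor.congr_obj (lf.strict Q) X).symm)
    (ℓ : ∀ (Q : C) (A : M),
      (T : M ⥤ M).obj ((L.obj Q).obj A) ⟶ (L.obj Q).obj ((T : M ⥤ M).obj A))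
    (hℓ : ∀ (Q : C) (A : M),
      ℓ Q A = (T : M ⥤ M).map ((L.obj Q).map (T.η.app A)) ≫ σ Q (T.free.obj A)) :
    ∀ {Q Q' : C} (g : Q ⟶ Q') (A : M),
      ℓ Q A ≫ (L.map g).app ((T : M ⥤ M).obj A)
        = (T : M ⥤ M).map ((L.map g).app A) ≫ ℓ Q' A := by
  intro Q Q' g A
  -- The carrier of the free algebra is rewritten as `T A` in the types below, so that `rw` sees
  -- syntactically matching objects.
  have aux : ∀ (s : (T : M ⥤ M).obj ((L.obj Q).obj ((T : M ⥤ M).obj A)) ⟶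
        (L.obj Q).obj ((T : M ⥤ M).obj A))
      (s' : (T : M ⥤ M).obj ((L.obj Q').obj ((T : M ⥤ M).obj A)) ⟶
        (L.obj Q').obj ((T : M ⥤ M).obj A)),
      s ≫ (L.map g).app ((T : M ⥤ M).obj A)
        = (T : M ⥤ M).map ((L.map g).app ((T : M ⥤ M).obj A)) ≫ s' →
      ((T : M ⥤ M).map ((L.obj Q).map (T.η.app A)) ≫ s) ≫ (L.map g).app ((T : M ⥤ M).obj A)
        = (T : M ⥤ M).map ((L.map g).app A) ≫
          (T : M ⥤ M).map ((L.obj Q').map (T.η.app A)) ≫ s' := by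
    intro s s' h
    have nat : (L.obj Q).map (T.η.app A) ≫ (L.map g).app ((T : M ⥤ M).obj A)
        = (L.map g).app A ≫ (L.obj Q').map (T.η.app A) :=
      (L.map g).naturality (T.η.app A)
    rw [Category.assoc, h, ← Functor.map_comp_assoc, nat, Functor.map_comp_assoc]
  rw [hℓ Q A, hℓ Q' A]
  exact aux _ _ (lf.structure_comp_map σ hσ g (T.free.obj A))
end

section
/- Let L̃ be a strict monoidal lift of the right action L of the monoidal category C on 𝓜 to 𝓜^T along U, let σ^Q_{(A,ν)} denote the structure morphism of L̃(Q)(A, ν), and set ℓ^Q_M := σ^Q_{F M} ∘ T(L(Q)(η_M)). Then the family {ℓ^Q} satisfies axiom (D2): for all objects Q, Q' of C and every object M of 𝓜, Ψ^{Q,Q'}_{T M} ∘ ℓ^{Q ⊗ Q'}_M = L(Q')(ℓ^Q_M) ∘ ℓ^{Q'}_{M ⋄ Q} ∘ T(Ψ^{Q,Q'}_M). -/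
/-!
Let `Z := L̃(Q)(F A)`, whose carrier is `T A ⋄ Q`. The map `ℓ^Q_A` is the morphism of algebras
`F (A ⋄ Q) ⟶ Z` adjunct to `L(Q)(η_A)`. Hence `L(Q')(ℓ^Q_A)` commutes with the lifted structure
morphisms (`sigma_naturality`), and the unit law `η ≫ ℓ^Q_A = L(Q)(η_A)` turns the right-hand side
of (D2) into `T(Ψ_A) ≫ T(L(Q')(L(Q)(η_A))) ≫ σ^{Q'}_Z`. The left-hand side is the same morphism
because `Ψ_{T A}` underlies a morphism of algebras, the structure morphism of `L̃` (`sigma_delta`),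
and because `Ψ` is natural. The chase itself is `d2_of_squares`.

The equalities of objects `U (L̃(Q)(X)) = U X ⋄ Q` are handled as isomorphisms `carrierIso`.
-/

open CategoryTheory MonoidalCategory

attribute [local instance] CategoryTheory.endofunctorMonoidalCategory

universe v₁ u₁ v₂ u₂

variable {M : Type u₁} [Category.{v₁} M]
variable {C : Type u₂} [Category.{v₂} C] [MonoidalCategory C]
namespace StrictMonoidalLift

/-- Transport along isomorphisms of carriers: a square expressing that a morphism commutes with
structure morphisms may be checked on the conjugated data. -/
lemma square_of_conj (T : M ⥤ M) {A A' B B' : M} (e : A ≅ B) (e' : A' ≅ B')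
    (s : T.obj B ⟶ B) (s' : T.obj B' ⟶ B') (f : B ⟶ B')
    (h : T.map (e.hom ≫ f ≫ e'.inv) ≫ T.map e'.hom ≫ s' ≫ e'.inv
      = (T.map e.hom ≫ s ≫ e.inv) ≫ e.hom ≫ f ≫ e'.inv) :
    T.map f ≫ s' = s ≫ f := by
  rw [← Functor.map_comp_assoc] at h
  simp only [Category.assoc, Iso.inv_hom_id, Category.comp_id, Iso.inv_hom_id_assoc,
    Functor.map_comp, cancel_epi] at h
  simpa only [← Category.assoc, cancel_mono] using h

/-- The diagram chase for (D2) with objects and morphisms abstracted: `T` is the monad, `P` is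
`L(Q')`, `n` is `L(Q)(η_A)`, `m` is `L(Q ⊗ Q')(η_A)`, `δ` and `δ'` are `Ψ_A` and `Ψ_{T A}`, and `i`
identifies `T A ⋄ Q` with the carrier of the lifted algebra. -/
lemma d2_of_squares (T P : M ⥤ M) {a b c d z : M} (i : b ≅ z) (η : a ⟶ T.obj a) (n : a ⟶ b)
    (l : T.obj a ⟶ b) (m : c ⟶ d) (δ : c ⟶ P.obj a) (δ' : d ⟶ P.obj b)
    (sz : T.obj (P.obj z) ⟶ P.obj z) (sf : T.obj (P.obj (T.obj a)) ⟶ P.obj (T.obj a))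
    (sd : T.obj d ⟶ d)
    (hN : T.map (P.map (l ≫ i.hom)) ≫ sz = sf ≫ P.map (l ≫ i.hom))
    (hD : T.map (δ' ≫ P.map i.hom) ≫ sz = sd ≫ δ' ≫ P.map i.hom)
    (hη : η ≫ l = n) (hnat : m ≫ δ' = δ ≫ P.map n) :
    (T.map m ≫ sd) ≫ δ' = T.map δ ≫ (T.map (P.map η) ≫ sf) ≫ P.map l := by
  rw [← cancel_mono (P.map i.hom)]
  subst hη
  calc
    _ = T.map ((m ≫ δ') ≫ P.map i.hom) ≫ sz := by
      simp only [Category.assoc, ← hD, Functor.map_comp]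
    _ = T.map δ ≫ T.map (P.map η) ≫ T.map (P.map (l ≫ i.hom)) ≫ sz := by
      simp only [hnat, Category.assoc, Functor.map_comp]
    _ = _ := by
      rw [hN]
      simp only [Category.assoc, Functor.map_comp]

/-- The morphism of algebras `F B ⟶ Z` adjunct to `f : B ⟶ U Z`, with a definitional formula for
its underlying morphism. -/
def adjunct {T : Monad M} {B : M} (Z : T.Algebra) (f : B ⟶ Z.A) : T.free.obj B ⟶ Z where
  f := (T : M ⥤ M).map f ≫ Z.a
  h := by
    change (T : M ⥤ M).map ((T : M ⥤ M).map f ≫ Z.a) ≫ Z.a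
      = T.μ.app B ≫ (T : M ⥤ M).map f ≫ Z.a
    rw [Functor.map_comp, Category.assoc, ← Z.assoc]
    exact T.μ.naturality_assoc f Z.a

variable {L : C ⥤ M ⥤ M} [L.Monoidal] {T : Monad M} (lf : StrictMonoidalLift L T)

/-- The equality `U (L̃(Q)(X)) = L(Q)(U X)` of objects of `𝓜`, as an isomorphism. -/
def carrierIso (Q : C) (X : T.Algebra) :
    ((lf.lift.obj Q).obj X).A ≅ (L.obj Q).obj X.A :=
  eqToIso (Functor.congr_obj (lf.strict Q) X)

lemma map_f (Q : C) {X Y : T.Algebra} (f : X ⟶ Y) :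
    ((lf.lift.obj Q).map f).f
      = (lf.carrierIso Q X).hom ≫ (L.obj Q).map f.f ≫ (lf.carrierIso Q Y).inv :=
  Functor.congr_hom (lf.strict Q) f

lemma delta_f (Q Q' : C) (X : T.Algebra) :
    (letI := lf.monoidal; ((Functor.OplaxMonoidal.δ lf.lift Q Q').app X).f)
      = (lf.carrierIso (Q ⊗ Q') X).hom ≫ (Functor.OplaxMonoidal.δ L Q Q').app X.A
          ≫ (L.obj Q').map (lf.carrierIso Q X).inv
          ≫ (lf.carrierIso Q' ((lf.lift.obj Q).obj X)).inv := by
  refine (lf.strict_δ Q Q' X).trans ?_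
  have h : (L.obj Q').map (lf.carrierIso Q X).inv
      = eqToHom (congrArg (L.obj Q').obj (Functor.congr_obj (lf.strict Q) X)).symm :=
    eqToHom_map (L.obj Q') (Functor.congr_obj (lf.strict Q) X).symm
  rw [h]
  refine congrArg (fun k => (lf.carrierIso (Q ⊗ Q') X).hom ≫
    (Functor.OplaxMonoidal.δ L Q Q').app X.A ≫ k) ?_
  exact (eqToHom_trans
    (congrArg (L.obj Q').obj (Functor.congr_obj (lf.strict Q) X)).symm
    (Functor.congr_obj (lf.strict Q') ((lf.lift.obj Q).obj X)).symm).symm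

variable {σ : ∀ (Q : C) (X : T.Algebra),
    (T : M ⥤ M).obj ((L.obj Q).obj X.A) ⟶ (L.obj Q).obj X.A}

/-- `L(Q)` applied to a morphism of algebras commutes with the lifted structure morphisms. -/
lemma sigma_naturality
    (hσ : ∀ (Q : C) (X : T.Algebra), ((lf.lift.obj Q).obj X).a
      = (T : M ⥤ M).map (lf.carrierIso Q X).hom ≫ σ Q X ≫ (lf.carrierIso Q X).inv)
    (Q : C) {X Y : T.Algebra} (f : X ⟶ Y) :
    (T : M ⥤ M).map ((L.obj Q).map f.f) ≫ σ Q Y = σ Q X ≫ (L.obj Q).map f.f := by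
  have h := ((lf.lift.obj Q).map f).h
  rw [hσ, hσ, lf.map_f] at h
  exact square_of_conj _ _ _ _ _ _ h

/-- The structure isomorphism `Ψ` of `L` commutes with the lifted structure morphisms, after
`L(Q)(U X)` is identified with the carrier of `L̃(Q)(X)`. -/
lemma sigma_delta
    (hσ : ∀ (Q : C) (X : T.Algebra), ((lf.lift.obj Q).obj X).a
      = (T : M ⥤ M).map (lf.carrierIso Q X).hom ≫ σ Q X ≫ (lf.carrierIso Q X).inv)
    (Q Q' : C) (X : T.Algebra) :
    (T : M ⥤ M).map ((Functor.OplaxMonoidal.δ L Q Q').app X.A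
        ≫ (L.obj Q').map (lf.carrierIso Q X).inv) ≫ σ Q' ((lf.lift.obj Q).obj X)
      = σ (Q ⊗ Q') X ≫ (Functor.OplaxMonoidal.δ L Q Q').app X.A
          ≫ (L.obj Q').map (lf.carrierIso Q X).inv := by
  let := lf.monoidal
  have h := ((Functor.OplaxMonoidal.δ lf.lift Q Q').app X).h
  -- The tensor product of endofunctors unfolds to composition.
  have h' : ((lf.lift.obj Q ⊗ lf.lift.obj Q').obj X).a = _ := hσ Q' ((lf.lift.obj Q).obj X)
  rw [h', hσ, lf.delta_f] at h
  refine square_of_conj (T : M ⥤ M) (lf.carrierIso (Q ⊗ Q') X)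
    (lf.carrierIso Q' ((lf.lift.obj Q).obj X)) _ _ _ ?_
  simpa only [Category.assoc] using h

end StrictMonoidalLift

/-- Given a strict monoidal lift `L̃` of the action `L` along the
forgetful functor, with `σ Q X` the structure morphism of `L̃(Q)(X)` and
`ℓ^Q_A := σ Q (F A) ∘ T (L(Q)(η_A))`, the family `{ℓ^Q}` satisfies axiom (D2):
`Ψ^{Q,Q'}_{T A} ∘ ℓ^{Q⊗Q'}_A = L(Q')(ℓ^Q_A) ∘ ℓ^{Q'}_{A ⋄ Q} ∘ T (Ψ^{Q,Q'}_A)`,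
where `Ψ = Functor.OplaxMonoidal.δ L`. -/
theorem stmt_12 (L : C ⥤ M ⥤ M) [L.Monoidal] (T : Monad M)
    (lf : StrictMonoidalLift L T)
    (σ : ∀ (Q : C) (X : T.Algebra),
      (T : M ⥤ M).obj ((L.obj Q).obj X.A) ⟶ (L.obj Q).obj X.A)
    (hσ : ∀ (Q : C) (X : T.Algebra),
      ((lf.lift.obj Q).obj X).a
        = eqToHom (congrArg (T : M ⥤ M).obj (Functor.congr_obj (lf.strict Q) X))
          ≫ σ Q X ≫ eqToHom (Functor.congr_obj (lf.strict Q) X).symm)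
    (ℓ : ∀ (Q : C) (A : M),
      (T : M ⥤ M).obj ((L.obj Q).obj A) ⟶ (L.obj Q).obj ((T : M ⥤ M).obj A))
    (hℓ : ∀ (Q : C) (A : M),
      ℓ Q A = (T : M ⥤ M).map ((L.obj Q).map (T.η.app A)) ≫ σ Q (T.free.obj A)) :
    ∀ (Q Q' : C) (A : M),
      ℓ (Q ⊗ Q') A ≫ (Functor.OplaxMonoidal.δ L Q Q').app ((T : M ⥤ M).obj A)
        = (T : M ⥤ M).map ((Functor.OplaxMonoidal.δ L Q Q').app A)
          ≫ ℓ Q' ((L.obj Q).obj A) ≫ (L.obj Q').map (ℓ Q A) := by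
  have hs : ∀ (Q : C) (X : T.Algebra), ((lf.lift.obj Q).obj X).a
      = (T : M ⥤ M).map (lf.carrierIso Q X).hom ≫ σ Q X ≫ (lf.carrierIso Q X).inv := by
    intro Q X
    refine (hσ Q X).trans ?_
    congr 1
    exact (eqToHom_map (T : M ⥤ M) (Functor.congr_obj (lf.strict Q) X)).symm
  intro Q Q' A
  let X := T.free.obj A
  let e := lf.carrierIso Q X
  let n : (L.obj Q).obj A ⟶ (L.obj Q).obj X.A := (L.obj Q).map (T.η.app A)
  have hℓ' : ℓ Q A = (T : M ⥤ M).map n ≫ σ Q X := hℓ Q A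
  have hg : (StrictMonoidalLift.adjunct _ (n ≫ e.inv)).f = ℓ Q A ≫ e.inv := by
    change (T : M ⥤ M).map (n ≫ e.inv) ≫ ((lf.lift.obj Q).obj X).a = _
    rw [hs, ← Functor.map_comp_assoc, Category.assoc, e.inv_hom_id, Category.comp_id]
    exact ((congrArg (· ≫ e.inv) hℓ').trans (Category.assoc _ _ _)).symm
  have hη : T.η.app ((L.obj Q).obj A) ≫ ℓ Q A = n := by
    have hu : T.η.app ((L.obj Q).obj A) ≫ (T : M ⥤ M).map (n ≫ e.inv) ≫
        ((lf.lift.obj Q).obj X).a = n ≫ e.inv := by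
      rw [← T.η.naturality_assoc, ((lf.lift.obj Q).obj X).unit]
      exact Category.comp_id _
    refine (cancel_mono e.inv).mp ?_
    exact (Category.assoc _ _ _).trans ((congrArg (T.η.app _ ≫ ·) hg.symm).trans hu)
  have hN := lf.sigma_naturality hs Q' (StrictMonoidalLift.adjunct _ (n ≫ e.inv))
  rw [hg] at hN
  have key := StrictMonoidalLift.d2_of_squares (T : M ⥤ M) (L.obj Q') e.symm
    (T.η.app ((L.obj Q).obj A)) n (ℓ Q A) ((L.obj (Q ⊗ Q')).map (T.η.app A))
    ((Functor.OplaxMonoidal.δ L Q Q').app A) ((Functor.OplaxMonoidal.δ L Q Q').app X.A)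
    (σ Q' ((lf.lift.obj Q).obj X)) (σ Q' (T.free.obj ((L.obj Q).obj A))) (σ (Q ⊗ Q') X)
    hN (lf.sigma_delta hs Q Q' X) hη ((Functor.OplaxMonoidal.δ L Q Q').naturality (T.η.app A))
  rw [hℓ (Q ⊗ Q') A, hℓ Q' ((L.obj Q).obj A)]
  exact key
end

section
/- Let L̃ be a strict monoidal lift of the right action L of the monoidal category C on 𝓜 to 𝓜^T along U, let σ^Q_{(A,ν)} denote the structure morphism of L̃(Q)(A, ν), and set ℓ^Q_M := σ^Q_{F M} ∘ T(L(Q)(η_M)). Then the family {ℓ^Q} satisfies axiom (D4): for every object M of 𝓜, ℓ^{𝟙_C}_M ∘ T(u_M) = u_{T M}. -/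
/-!
The unit constraint of the lift is a morphism of `T`-algebras `X ⟶ L̃(𝟙)(X)` whose underlying map
is `u`, so `T(u_{X.A}) ≫ σ^𝟙_X = X.a ≫ u_{X.A}` for every algebra `X` (`map_unit_comp_structure`).
Take `X = F A`, whose structure map is `μ_A`. Naturality of `u` at `η_A` moves `T(L(𝟙)(η_A))` past
`T(u_A)`, turning the left-hand side of (D4) into `T(η_A) ≫ μ_A ≫ u_{T A}`, and the monad law
`T(η_A) ≫ μ_A = 𝟙` concludes.
-/

open CategoryTheory MonoidalCategory

attribute [local instance] CategoryTheory.endofunctorMonoidalCategory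

universe v₁ u₁ v₂ u₂

variable {M : Type u₁} [Category.{v₁} M]
variable {C : Type u₂} [Category.{v₂} C] [MonoidalCategory C]
/-- If an algebra structure on `B` is the transport of `s` along `e : B = Y`, then a morphism
into it which is the transport of `u : A ⟶ Y` is compatible with `s` itself. -/
theorem algebra_hom_of_transport (T : M ⥤ M) {A B Y : M} (e : B = Y) (u : A ⟶ Y)
    (a : T.obj A ⟶ A) (s : T.obj Y ⟶ Y)
    (h : T.map (u ≫ eqToHom e.symm) ≫ eqToHom (congrArg T.obj e) ≫ s ≫ eqToHom e.symm
      = a ≫ u ≫ eqToHom e.symm) :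
    T.map u ≫ s = a ≫ u := by
  subst e
  simpa using h

/-- The free-algebra computation: if `u` and `u'` are intertwined by `η_A` and `k`, and
`T(u') ≫ s = μ_A ≫ u'`, then `T(u) ≫ T(k) ≫ s = T(η_A) ≫ μ_A ≫ u' = u'`. -/
theorem map_comp_eq_of_unit (T : Monad M) {A Y Z : M} (u : A ⟶ Y)
    (u' : (T : M ⥤ M).obj A ⟶ Z) (k : Y ⟶ Z) (s : (T : M ⥤ M).obj Z ⟶ Z)
    (nat : u ≫ k = T.η.app A ≫ u')
    (alg : (T : M ⥤ M).map u' ≫ s = T.μ.app A ≫ u') :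
    (T : M ⥤ M).map u ≫ (T : M ⥤ M).map k ≫ s = u' := by
  rw [← Functor.map_comp_assoc, nat, Functor.map_comp_assoc, alg, T.right_unit_assoc]

/-- The component `u_{X.A}` is a morphism of `T`-algebras from `X` to `L̃(𝟙)(X)`, with the equality
of objects `L̃(𝟙)(X).A = L(𝟙)(X.A)` transported away. -/
theorem map_unit_comp_structure (L : C ⥤ M ⥤ M) [L.Monoidal] (T : Monad M)
    (lf : StrictMonoidalLift L T) (X : T.Algebra)
    (s : (T : M ⥤ M).obj ((L.obj (𝟙_ C)).obj X.A) ⟶ (L.obj (𝟙_ C)).obj X.A)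
    (hs : ((lf.lift.obj (𝟙_ C)).obj X).a
        = eqToHom (congrArg (T : M ⥤ M).obj (Functor.congr_obj (lf.strict (𝟙_ C)) X))
          ≫ s ≫ eqToHom (Functor.congr_obj (lf.strict (𝟙_ C)) X).symm) :
    (T : M ⥤ M).map ((Functor.LaxMonoidal.ε L).app X.A) ≫ s
      = X.a ≫ (Functor.LaxMonoidal.ε L).app X.A := by
  let _ := lf.monoidal
  have h : (T : M ⥤ M).map ((Functor.LaxMonoidal.ε lf.lift).app X).f
        ≫ ((lf.lift.obj (𝟙_ C)).obj X).a
      = X.a ≫ ((Functor.LaxMonoidal.ε lf.lift).app X).f :=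
    ((Functor.LaxMonoidal.ε lf.lift).app X).h
  rw [lf.strict_ε X, hs] at h
  exact algebra_hom_of_transport (T : M ⥤ M) (Functor.congr_obj (lf.strict (𝟙_ C)) X)
    ((Functor.LaxMonoidal.ε L).app X.A) X.a s h

/-- Given a strict monoidal lift `L̃` of the action `L` along the
forgetful functor, with `σ Q X` the structure morphism of `L̃(Q)(X)` and
`ℓ^Q_A := σ Q (F A) ∘ T (L(Q)(η_A))`, the family `{ℓ^Q}` satisfies axiom (D4):
`ℓ^{𝟙_C}_A ∘ T (u_A) = u_{T A}`, where `u = Functor.LaxMonoidal.ε L`. -/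
theorem stmt_13 (L : C ⥤ M ⥤ M) [L.Monoidal] (T : Monad M)
    (lf : StrictMonoidalLift L T)
    (σ : ∀ (Q : C) (X : T.Algebra),
      (T : M ⥤ M).obj ((L.obj Q).obj X.A) ⟶ (L.obj Q).obj X.A)
    (hσ : ∀ (Q : C) (X : T.Algebra),
      ((lf.lift.obj Q).obj X).a
        = eqToHom (congrArg (T : M ⥤ M).obj (Functor.congr_obj (lf.strict Q) X))
          ≫ σ Q X ≫ eqToHom (Functor.congr_obj (lf.strict Q) X).symm)
    (ℓ : ∀ (Q : C) (A : M),
      (T : M ⥤ M).obj ((L.obj Q).obj A) ⟶ (L.obj Q).obj ((T : M ⥤ M).obj A))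
    (hℓ : ∀ (Q : C) (A : M),
      ℓ Q A = (T : M ⥤ M).map ((L.obj Q).map (T.η.app A)) ≫ σ Q (T.free.obj A)) :
    ∀ A : M,
      (T : M ⥤ M).map ((Functor.LaxMonoidal.ε L).app A) ≫ ℓ (𝟙_ C) A
        = (Functor.LaxMonoidal.ε L).app ((T : M ⥤ M).obj A) := by
  intro A
  have alg := map_unit_comp_structure L T lf (T.free.obj A) _ (hσ (𝟙_ C) (T.free.obj A))
  rw [hℓ]
  exact map_comp_eq_of_unit T _ _ _ _
    ((Functor.LaxMonoidal.ε L).naturality (T.η.app A)).symm alg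
end

section
/- Let L̃ be a strict monoidal lift of the right action L of the monoidal category C on 𝓜 to 𝓜^T along U, let σ^Q_{(A,ν)} denote the structure morphism of L̃(Q)(A, ν), and set ℓ^Q_M := σ^Q_{F M} ∘ T(L(Q)(η_M)). Then for every object Q of C and every T-algebra (A, ν), the structure morphism of L̃(Q)(A, ν) is recovered as σ^Q_{(A,ν)} = L(Q)(ν) ∘ ℓ^Q_A; that is, the strict lift determined by the family {ℓ^Q} agrees with L̃(Q) on every T-algebra. -/
/-! The `T`-algebra structure map `a : T A ⟶ A` is itself a morphism of algebras from the free
algebra `F A` to `(A, a)`. Since `L̃(Q)` lifts `L(Q)`, the morphism `L(Q)(a)` is then an algebra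
morphism `L̃(Q)(F A) ⟶ L̃(Q)(A, a)` (`lift_structure_comm`), so
`L(Q)(a) ∘ σ_{F A} = σ_{(A, a)} ∘ T(L(Q)(a))`. Precomposing with `T(L(Q)(η_A))` and using the unit
law `a ∘ η_A = id` gives the claim. -/

open CategoryTheory MonoidalCategory

attribute [local instance] CategoryTheory.endofunctorMonoidalCategory

universe v₁ u₁ v₂ u₂

variable {M : Type u₁} [Category.{v₁} M]
variable {C : Type u₂} [Category.{v₂} C] [MonoidalCategory C]
/-- Commutation with structure maps can be tested after transporting the structure maps and the
morphism along equalities of objects. -/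
lemma comm_of_transport (F : M ⥤ M) {A A' B B' : M} (hA : A' = A) (hB : B' = B)
    (s : F.obj A ⟶ A) (t : F.obj B ⟶ B) (g : A ⟶ B)
    (h : F.map (eqToHom hA ≫ g ≫ eqToHom hB.symm)
        ≫ (eqToHom (congrArg F.obj hB) ≫ t ≫ eqToHom hB.symm)
      = (eqToHom (congrArg F.obj hA) ≫ s ≫ eqToHom hA.symm)
        ≫ (eqToHom hA ≫ g ≫ eqToHom hB.symm)) :
    F.map g ≫ t = s ≫ g := by
  subst hA hB
  simpa using h

/-- The claim for one functor, given that `L(Q)(a)` commutes with the structure maps `s` of the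
lift of the free algebra and `t` of the lift of `(A, a)`; here `F` is the underlying functor of the
monad and `H` is `L(Q)`. -/
lemma eq_comp_of_comm (F H : M ⥤ M) {A : M} (e : A ⟶ F.obj A) (a : F.obj A ⟶ A)
    (unit : e ≫ a = 𝟙 A) (s : F.obj (H.obj (F.obj A)) ⟶ H.obj (F.obj A))
    (t : F.obj (H.obj A) ⟶ H.obj A) (h : F.map (H.map a) ≫ t = s ≫ H.map a) :
    t = (F.map (H.map e) ≫ s) ≫ H.map a := by
  rw [Category.assoc, ← h, ← Category.assoc, ← F.map_comp, ← H.map_comp, unit]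
  simp

/-- If `G` lifts the endofunctor `H` strictly along the forgetful functor, then `H` sends the
morphism underlying an algebra morphism to one commuting with the structure maps `σ` of `G`,
transported along the object equalities of the lift. -/
lemma lift_structure_comm {T : Monad M} {G : T.Algebra ⥤ T.Algebra} {H : M ⥤ M}
    (strict : G ⋙ T.forget = T.forget ⋙ H)
    (σ : ∀ X : T.Algebra, (T : M ⥤ M).obj (H.obj X.A) ⟶ H.obj X.A)
    (hσ : ∀ X : T.Algebra,
      (G.obj X).a = eqToHom (congrArg (T : M ⥤ M).obj (Functor.congr_obj strict X))
        ≫ σ X ≫ eqToHom (Functor.congr_obj strict X).symm)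
    {X Y : T.Algebra} (f : X ⟶ Y) :
    (T : M ⥤ M).map (H.map f.f) ≫ σ Y = σ X ≫ H.map f.f := by
  have hf : (G.map f).f = eqToHom (Functor.congr_obj strict X) ≫ H.map f.f
      ≫ eqToHom (Functor.congr_obj strict Y).symm := Functor.congr_hom strict f
  have h := (G.map f).h
  rw [hf, hσ X, hσ Y] at h
  exact comm_of_transport (T : M ⥤ M) (Functor.congr_obj strict X) (Functor.congr_obj strict Y)
    (σ X) (σ Y) (H.map f.f) h

/-- Given a strict monoidal lift `L̃` of the action `L` along the
forgetful functor, with `σ Q X` the structure morphism of `L̃(Q)(X)` and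
`ℓ^Q_A := σ Q (F A) ∘ T (L(Q)(η_A))`, the structure morphism of `L̃(Q)(X)` is
recovered from `ℓ`: `σ Q X = L(Q)(X.a) ∘ ℓ^Q_{X.A}` for every `Q` and every
`T`-algebra `X`. -/
theorem stmt_14 (L : C ⥤ M ⥤ M) [L.Monoidal] (T : Monad M)
    (lf : StrictMonoidalLift L T)
    (σ : ∀ (Q : C) (X : T.Algebra),
      (T : M ⥤ M).obj ((L.obj Q).obj X.A) ⟶ (L.obj Q).obj X.A)
    (hσ : ∀ (Q : C) (X : T.Algebra),
      ((lf.lift.obj Q).obj X).a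
        = eqToHom (congrArg (T : M ⥤ M).obj (Functor.congr_obj (lf.strict Q) X))
          ≫ σ Q X ≫ eqToHom (Functor.congr_obj (lf.strict Q) X).symm)
    (ℓ : ∀ (Q : C) (A : M),
      (T : M ⥤ M).obj ((L.obj Q).obj A) ⟶ (L.obj Q).obj ((T : M ⥤ M).obj A))
    (hℓ : ∀ (Q : C) (A : M),
      ℓ Q A = (T : M ⥤ M).map ((L.obj Q).map (T.η.app A)) ≫ σ Q (T.free.obj A)) :
    ∀ (Q : C) (X : T.Algebra), σ Q X = ℓ Q X.A ≫ (L.obj Q).map X.a := by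
  intro Q X
  -- The structure map of `X`, viewed as an algebra morphism from the free algebra on `X.A`.
  let p : T.free.obj X.A ⟶ X := { f := X.a, h := X.assoc.symm }
  have h : (T : M ⥤ M).map ((L.obj Q).map X.a) ≫ σ Q X
      = σ Q (T.free.obj X.A) ≫ (L.obj Q).map X.a :=
    lift_structure_comm (lf.strict Q) (σ Q) (hσ Q) p
  rw [hℓ]
  exact eq_comp_of_comm (T : M ⥤ M) (L.obj Q) (T.η.app X.A) X.a X.unit _ _ h
end
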